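/- arXiv:2210.01699 — 5 statements merged into one kernel-verified Lean document; each statement's English description precedes it below -/
import Mathlib

section
/- Let N ≥ 2 and let p̄, ν, γ > 0 and k_d, k_o, x_d, x_o be real numbers. Let A ∈ ℝ^{N×N} have entries A_ii = p̄(1−N)/N and A_ij = p̄/N for i ≠ j; let K ∈ ℝ^{N×N} have entries K_ii = k_d and K_ij = k_o/N for i ≠ j; and let X ∈ ℝ^{N×N} have entries X_ii = x_d and X_ij = x_o for i ≠ j. Define M = AᵀX + XA − (1/ν)KᵀX − (1/ν)XK + (1/γ)XX + (1/γ)Id_N, and set λ = x_d − x_o and c_N = p̄ + (1/ν)(k_d − k_o/N). Then for every i ≠ j, M_ii − M_ij = (1/γ)(λ² − 2γ·c_N·λ + 1). -/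
open Matrix

/-!
A matrix with constant diagonal `a` and constant off-diagonal `b` is `(a - b) I + b J`, with `J` the
all-ones matrix. It acts on `e_i - e_j` as the scalar `a - b`, since `J` kills that vector. Hence
"diagonal minus off-diagonal entry" is multiplicative on such matrices (`mul_diag_sub_offdiag`).
It is also linear and takes the values `-p`, `kd - ko / N`, `lam`, `1` on `A`, `K`, `X`, `1`, so the
identity reduces to scalar algebra.
-/

/-- The matrix with constant diagonal entry `a` and constant off-diagonal entry `b`. -/
def diagOff (N : ℕ) (a b : ℝ) : Matrix (Fin N) (Fin N) ℝ :=
  Matrix.of fun i j => if i = j then a else b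

lemma diagOff_transpose (N : ℕ) (a b : ℝ) : (diagOff N a b)ᵀ = diagOff N a b := by
  ext i j
  simp [diagOff, eq_comm]

lemma mul_diag_sub_offdiag {N : ℕ} (a b c d : ℝ) {i j : Fin N} (hij : i ≠ j) :
    (diagOff N a b * diagOff N c d) i i - (diagOff N a b * diagOff N c d) i j
      = (a - b) * (c - d) := by
  have split : ∀ k l : Fin N, (if k = l then c else d) = d + if k = l then c - d else 0 := by
    intro k l
    split_ifs <;> ring
  simp only [Matrix.mul_apply, diagOff, Matrix.of_apply, split, mul_add, Finset.sum_add_distrib,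
    mul_ite, mul_zero, Finset.sum_ite_eq', Finset.mem_univ, if_true, if_neg hij]
  ring

/-- The difference of a diagonal and an off-diagonal entry of the H∞ Riccati residual
equals `(1/γ)(λ² - 2γ c_N λ + 1)` with `λ = x_d - x_o` and `c_N = p̄ + (k_d - k_o/N)/ν`. -/
theorem hinf_riccati_residual_diag_minus_offdiag
    (N : ℕ) (hN : 2 ≤ N) (p ν γ : ℝ) (hp : 0 < p) (hν : 0 < ν) (hγ : 0 < γ)
    (kd ko xd xo : ℝ)
    (A K X M : Matrix (Fin N) (Fin N) ℝ)
    (hA : A = Matrix.of fun i j => if i = j then p * (1 - (N : ℝ)) / N else p / N)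
    (hK : K = Matrix.of fun i j => if i = j then kd else ko / N)
    (hX : X = Matrix.of fun i j => if i = j then xd else xo)
    (hM : M = Aᵀ * X + X * A - (1 / ν) • (Kᵀ * X) - (1 / ν) • (X * K)
        + (1 / γ) • (X * X) + (1 / γ) • (1 : Matrix (Fin N) (Fin N) ℝ))
    (lam cN : ℝ) (hlam : lam = xd - xo) (hcN : cN = p + (1 / ν) * (kd - ko / N)) :
    ∀ i j : Fin N, i ≠ j →
      M i i - M i j = (1 / γ) * (lam ^ 2 - 2 * γ * cN * lam + 1) := by
  intro i j hij
  have hNne : (N : ℝ) ≠ 0 := by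
    have : N ≠ 0 := by omega
    exact_mod_cast this
  change A = diagOff N _ _ at hA
  change K = diagOff N _ _ at hK
  change X = diagOff N _ _ at hX
  have hAX := mul_diag_sub_offdiag (p * (1 - (N : ℝ)) / N) (p / N) xd xo hij
  have hXA := mul_diag_sub_offdiag xd xo (p * (1 - (N : ℝ)) / N) (p / N) hij
  have hKX := mul_diag_sub_offdiag kd (ko / N) xd xo hij
  have hXK := mul_diag_sub_offdiag xd xo kd (ko / N) hij
  have hXX := mul_diag_sub_offdiag xd xo xd xo hij
  have hAval : p * (1 - (N : ℝ)) / N - p / N = -p := by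
    field_simp
    ring
  rw [hAval] at hAX hXA
  have hγ' : 1 / γ * γ = 1 := one_div_mul_cancel hγ.ne'
  subst hM hA hK hX hlam hcN
  simp only [diagOff_transpose, Matrix.add_apply, Matrix.sub_apply, Matrix.smul_apply,
    smul_eq_mul, Matrix.one_apply_eq, Matrix.one_apply_ne hij]
  linear_combination hAX + hXA - (1 / ν) * hKX - (1 / ν) * hXK + (1 / γ) * hXX
    + 2 * (p + (1 / ν) * (kd - ko / N)) * (xd - xo) * hγ'
end

section
/- Let N ≥ 2 and let p̄, ν, γ > 0 and k_d, k_o be real numbers. Set c_N = p̄ + (1/ν)(k_d − k_o/N), and assume c_N > 0 and γ·c_N ≥ 1. Let λ be either root λ = γ·c_N ± √(γ²c_N² − 1), and set X = λ·Id_N. Let A ∈ ℝ^{N×N} have entries A_ii = p̄(1−N)/N and A_ij = p̄/N for i ≠ j, and let K ∈ ℝ^{N×N} have entries K_ii = k_d and K_ij = k_o/N for i ≠ j. Then X is symmetric positive definite and AᵀX + XA − (1/ν)KᵀX − (1/ν)XK + (1/γ)XX + (1/γ)Id_N = (2λ(p̄ − k_o/ν)/N)·𝟙_{N×N}, where 𝟙_{N×N}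 is the N×N all-ones matrix; in particular every entry of the left-hand side has absolute value at most 2λ|p̄ − k_o/ν|/N, i.e. the Riccati residual is O(1/N). -/
/-!
Either value of `lam` is a root of `lam ^ 2 - 2 * γ * cN * lam + 1 = 0`. As `γ * cN > 0`, this forces
`lam > 0`, so `X = lam • 1` is positive definite. Since `X` is scalar and `A`, `K` are symmetric,
the residual is `2 * lam • (A - (1 / ν) • K) + ((lam ^ 2 + 1) / γ) • 1`. The off-diagonal entries are
`2 * lam * (p - ko / ν) / N`, and `(lam ^ 2 + 1) / γ = 2 * cN * lam` together with the definition of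
`cN` gives the same value on the diagonal.
-/

open Matrix

/-- H∞-robustness: for `λ` either root of `λ² - 2γ c_N λ + 1 = 0`, the matrix `X = λ·Id` is
symmetric positive definite and the Riccati residual equals `(2λ(p̄ - k_o/ν)/N)·𝟙`,
hence every entry of the residual is `O(1/N)`. -/
theorem hinf_robustness
    (N : ℕ) (hN : 2 ≤ N) (p ν γ kd ko : ℝ) (hp : 0 < p) (hν : 0 < ν) (hγ : 0 < γ)
    (cN : ℝ) (hcN : cN = p + (1 / ν) * (kd - ko / N)) (hc : 0 < cN) (hγc : 1 ≤ γ * cN)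
    (lam : ℝ)
    (hlam : lam = γ * cN + Real.sqrt (γ ^ 2 * cN ^ 2 - 1) ∨
            lam = γ * cN - Real.sqrt (γ ^ 2 * cN ^ 2 - 1))
    (A K X : Matrix (Fin N) (Fin N) ℝ)
    (hA : A = Matrix.of fun i j => if i = j then p * (1 - (N : ℝ)) / N else p / N)
    (hK : K = Matrix.of fun i j => if i = j then kd else ko / N)
    (hX : X = lam • (1 : Matrix (Fin N) (Fin N) ℝ)) :
    X.PosDef ∧
    (Aᵀ * X + X * A - (1 / ν) • (Kᵀ * X) - (1 / ν) • (X * K)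
        + (1 / γ) • (X * X) + (1 / γ) • (1 : Matrix (Fin N) (Fin N) ℝ)
      = (2 * lam * (p - ko / ν) / N) • (Matrix.of fun _ _ => (1 : ℝ))) ∧
    (∀ i j : Fin N,
      |(Aᵀ * X + X * A - (1 / ν) • (Kᵀ * X) - (1 / ν) • (X * K)
          + (1 / γ) • (X * X) + (1 / γ) • (1 : Matrix (Fin N) (Fin N) ℝ)) i j|
        ≤ 2 * lam * |p - ko / ν| / N) := by
  -- Both choices of sign are roots of the same quadratic, which is all that is used about `lam`.
  have hquad : lam ^ 2 + 1 = 2 * (γ * cN) * lam := by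
    have hs : Real.sqrt (γ ^ 2 * cN ^ 2 - 1) ^ 2 = γ ^ 2 * cN ^ 2 - 1 :=
      Real.sq_sqrt (by nlinarith)
    rcases hlam with h | h <;> rw [h] <;> linear_combination hs
  have hlam0 : 0 < lam := by
    have h : 0 < 2 * (γ * cN) * lam := hquad ▸ by positivity
    exact pos_of_mul_pos_right h (by positivity)
  have hN0 : (0 : ℝ) < N := by
    exact_mod_cast (by omega : 0 < N)
  have hdiv : 1 / γ * (lam * lam) + 1 / γ = 2 * cN * lam := by
    field_simp
    linear_combination hquad
  have hres : Aᵀ * X + X * A - (1 / ν) • (Kᵀ * X) - (1 / ν) • (X * K)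
        + (1 / γ) • (X * X) + (1 / γ) • (1 : Matrix (Fin N) (Fin N) ℝ)
      = (2 * lam * (p - ko / ν) / N) • (Matrix.of fun _ _ => (1 : ℝ)) := by
    subst hA hK hX
    ext i j
    by_cases hij : i = j
    · subst hij
      simp only [Matrix.mul_smul, Matrix.smul_mul, Matrix.mul_one, Matrix.one_mul,
        Matrix.add_apply, Matrix.sub_apply, Matrix.smul_apply, Matrix.transpose_apply,
        Matrix.of_apply, Matrix.one_apply_eq, if_true, smul_eq_mul, mul_one]
      rw [add_assoc, hdiv, hcN]
      field_simp
      ring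
    · simp only [Matrix.mul_smul, Matrix.smul_mul, Matrix.mul_one, Matrix.one_mul,
        Matrix.add_apply, Matrix.sub_apply, Matrix.smul_apply, Matrix.transpose_apply,
        Matrix.of_apply, Matrix.one_apply_ne hij, if_neg hij, if_neg (Ne.symm hij),
        smul_eq_mul, mul_one, mul_zero]
      field_simp
      ring
  refine ⟨hX ▸ Matrix.PosDef.one.smul hlam0, hres, fun i j => ?_⟩
  rw [hres]
  simp only [Matrix.smul_apply, Matrix.of_apply, smul_eq_mul, mul_one]
  rw [abs_div, abs_mul, abs_of_pos hN0, abs_of_pos (by positivity : 0 < 2 * lam)]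
end

section
/- Let ν > 0, p̄ > 0 and r ≥ 0 be real numbers, and set k_d = −ν(p̄ + r/2) + ν·√((p̄ + r/2)² + 1/ν). Then p̄ + k_d/ν > 0, the number √((p̄ + r/2)²·ν + 1) − (r·√ν)/2 is strictly positive, and 1/(p̄ + k_d/ν) = √ν / (√((p̄ + r/2)²·ν + 1) − (r·√ν)/2). In particular, for r = 0 this lower bound equals √(ν/(p̄²ν + 1)). -/
/-!
Writing `S = √((p + r/2)² + 1/ν)`, the Riccati root gives `p + kd/ν = S - r/2`, which is positive
because `S > p + r/2 > r/2`. Since `(p + r/2)²ν + 1 = ν S²`, the denominator in the claim is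
`√ν (S - r/2)`, and everything follows.
-/

/-- For the positive root `k_d` of the mean-field Riccati equation, `p̄ + k_d/ν > 0`,
the denominator `√((p̄ + r/2)²ν + 1) - r√ν/2` is strictly positive, and
`1/(p̄ + k_d/ν) = √ν / (√((p̄ + r/2)²ν + 1) - r√ν/2)`; for `r = 0` this equals
`√(ν/(p̄²ν + 1))`. -/
theorem hinf_gamma_lower_bound
    (ν p r : ℝ) (hν : 0 < ν) (hp : 0 < p) (hr : 0 ≤ r)
    (kd : ℝ) (hkd : kd = -ν * (p + r / 2) + ν * Real.sqrt ((p + r / 2) ^ 2 + 1 / ν)) :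
    0 < p + kd / ν ∧
    0 < Real.sqrt ((p + r / 2) ^ 2 * ν + 1) - r * Real.sqrt ν / 2 ∧
    1 / (p + kd / ν)
      = Real.sqrt ν / (Real.sqrt ((p + r / 2) ^ 2 * ν + 1) - r * Real.sqrt ν / 2) ∧
    (r = 0 →
      Real.sqrt ν / (Real.sqrt ((p + r / 2) ^ 2 * ν + 1) - r * Real.sqrt ν / 2)
        = Real.sqrt (ν / (p ^ 2 * ν + 1))) := by
  have hs : 0 < Real.sqrt ν := Real.sqrt_pos.mpr hν
  have hc : p + kd / ν = Real.sqrt ((p + r / 2) ^ 2 + 1 / ν) - r / 2 := by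
    rw [hkd]
    field_simp
    ring
  have hD : Real.sqrt ((p + r / 2) ^ 2 * ν + 1) - r * Real.sqrt ν / 2
      = Real.sqrt ν * (p + kd / ν) := by
    have h : (p + r / 2) ^ 2 * ν + 1 = ν * ((p + r / 2) ^ 2 + 1 / ν) := by
      field_simp
    rw [hc, h, Real.sqrt_mul hν.le]
    ring
  have hpos : 0 < p + kd / ν := by
    have h : r / 2 < Real.sqrt ((p + r / 2) ^ 2 + 1 / ν) := by
      apply Real.lt_sqrt_of_sq_lt
      have : 0 < 1 / ν := by positivity
      nlinarith [mul_nonneg hp.le hr, sq_nonneg p]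
    rw [hc]
    linarith
  refine ⟨hpos, ?_, ?_, ?_⟩
  · rw [hD]
    positivity
  · rw [hD]
    field_simp
  · rintro rfl
    rw [Real.sqrt_div hν.le]
    simp
end

section
/- Let N ≥ 2, Z ≥ 1, p̄ ∈ ℝ and ν > 0. Let A ∈ ℝ^{N×N} have entries A_ii = p̄(1−N)/N and A_ij = p̄/N for i ≠ j, and let B = 𝟙_{N×Z} be the N×Z all-ones matrix. Let k_d, k_o, s : ℝ → ℝ be differentiable functions, let K(t) ∈ ℝ^{N×N} have entries K(t)_ii = k_d(t) and K(t)_ij = k_o(t) for i ≠ j, and let S(t) = s(t)·𝟙_{N×Z}. Then S satisfies the matrix differential equation −dS/dt = K(t)B + AᵀS(t) − (N/ν)K(t)S(t) for all t if and only if s satisfies the scalar differential equation −ds/dt = (k_d(t) + (N−1)k_o(t))·(1 − N·s(t)/ν) for all t. -/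
/-! Multiplying the all-ones matrix by a matrix with constant diagonal `a` and constant
off-diagonal `b` multiplies it by the common row sum `a + (N - 1) b`. For `A` this row sum is `0`,
so the term `Aᵀ S` vanishes; for `K` it is `k_d + (N - 1) k_o`. Hence every entry of the matrix
equation is the same scalar equation, and `N, Z ≥ 1` guarantees that there is an entry. -/

open Matrix

lemma sum_diag_offdiag_mul {N : ℕ} (i : Fin N) (a b c : ℝ) :
    ∑ j : Fin N, (if i = j then a else b) * c = (a + ((N : ℝ) - 1) * b) * c := by
  have h : ∀ j : Fin N, (if i = j then a else b) * c = (if i = j then (a - b) * c else 0) + b * c := by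
    intro j
    split_ifs <;> ring
  simp only [h, Finset.sum_add_distrib, Finset.sum_ite_eq, Finset.mem_univ, if_true,
    Finset.sum_const, Finset.card_univ, Fintype.card_fin, nsmul_eq_mul]
  ring

/-- The matrix ODE `-Ṡ = K B + Aᵀ S - (N/ν) K S` for `S(t) = s(t)·𝟙_{N×Z}` is equivalent to
the scalar ODE `-ṡ = (k_d + (N-1) k_o)(1 - N s/ν)`. -/
theorem averaged_control_matrix_ode_iff_scalar
    (N Z : ℕ) (hN : 2 ≤ N) (hZ : 1 ≤ Z) (p ν : ℝ) (hν : 0 < ν)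
    (kd ko s : ℝ → ℝ)
    (hkd : Differentiable ℝ kd) (hko : Differentiable ℝ ko) (hs : Differentiable ℝ s)
    (A : Matrix (Fin N) (Fin N) ℝ) (B : Matrix (Fin N) (Fin Z) ℝ)
    (K : ℝ → Matrix (Fin N) (Fin N) ℝ) (S : ℝ → Matrix (Fin N) (Fin Z) ℝ)
    (hA : A = Matrix.of fun i j => if i = j then p * (1 - (N : ℝ)) / N else p / N)
    (hB : B = Matrix.of fun _ _ => (1 : ℝ))
    (hK : ∀ t, K t = Matrix.of fun i j => if i = j then kd t else ko t)
    (hS : ∀ t, S t = Matrix.of fun _ _ => s t) :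
    (∀ t, ∀ i : Fin N, ∀ j : Fin Z,
        -deriv (fun τ => S τ i j) t
          = (K t * B + Aᵀ * S t - ((N : ℝ) / ν) • (K t * S t)) i j) ↔
    (∀ t, -deriv s t = (kd t + ((N : ℝ) - 1) * ko t) * (1 - (N : ℝ) * s t / ν)) := by
  have hN0 : (N : ℝ) ≠ 0 := by
    have : N ≠ 0 := by omega
    exact_mod_cast this
  have entry : ∀ t (i : Fin N) (j : Fin Z),
      (K t * B + Aᵀ * S t - ((N : ℝ) / ν) • (K t * S t)) i j
        = (kd t + ((N : ℝ) - 1) * ko t) * (1 - (N : ℝ) * s t / ν) := by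
    intro t i j
    have h1 : (K t * B) i j = (kd t + ((N : ℝ) - 1) * ko t) * 1 := by
      rw [Matrix.mul_apply, hK, hB]
      exact sum_diag_offdiag_mul i _ _ _
    have h2 : (Aᵀ * S t) i j = 0 := by
      rw [Matrix.mul_apply, hA, hS]
      simp only [Matrix.transpose_apply, Matrix.of_apply, eq_comm (b := i)]
      rw [sum_diag_offdiag_mul]
      field_simp
      ring
    have h3 : (K t * S t) i j = (kd t + ((N : ℝ) - 1) * ko t) * s t := by
      rw [Matrix.mul_apply, hK, hS]
      exact sum_diag_offdiag_mul i _ _ _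
    rw [Matrix.sub_apply, Matrix.add_apply, Matrix.smul_apply, h1, h2, h3, smul_eq_mul]
    ring
  have hder : ∀ (i : Fin N) (j : Fin Z), (fun τ => S τ i j) = s := by
    intro i j
    funext τ
    rw [hS, Matrix.of_apply]
  simp only [entry, hder]
  exact ⟨fun h t => h t ⟨0, by omega⟩ ⟨0, by omega⟩, fun h t _ _ => h t⟩
end

section
/- Let N ≥ 2 and let p̄ ∈ ℝ, ν > 0. Let A ∈ ℝ^{N×N} have entries A_ii = p̄(1−N)/N and A_ij = p̄/N for i ≠ j. Let k_d, k_o : ℝ → ℝ be differentiable and let K(t) ∈ ℝ^{N×N} have entries K(t)_ii = k_d(t) and K(t)_ij = k_o(t) for i ≠ j. Then K satisfies the matrix Riccati differential equation −dK/dt = K(t)A + AᵀK(t) − (N/ν)K(t)² + (1/N)Id_N for all t if and only if (k_d, k_o) satisfies, for all t, the scalar system −dk_d/dt = −(2p̄(N−1)/N)(k_d − k_o) − (N/ν)(k_d² + (N−1)k_o²) + 1/N and −dk_o/dt = (2p̄/N)(k_d − k_o) − (N/ν)(2k_d·k_o + (N−2)k_o²). -/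
/-!
Matrices with one constant value on the diagonal and another off it form a commutative algebra
(they are the combinations of the identity and the all-ones matrix), closed under products by
`twoValued_mul`. Hence the right-hand side of the Riccati equation has the same shape as `K`, and
the matrix equation says exactly that its diagonal and its off-diagonal value agree with those of
`-K̇`. Since `N ≥ 2`, both a diagonal and an off-diagonal entry exist, so no scalar equation is lost.
-/

open Matrix

/-- The matrix with `a` on the diagonal and `b` everywhere else. -/
def twoValued (N : ℕ) (a b : ℝ) : Matrix (Fin N) (Fin N) ℝ :=
  Matrix.of fun i j => if i = j then a else b

theorem twoValued_mul (N : ℕ) (a b c d : ℝ) :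
    twoValued N a b * twoValued N c d
      = twoValued N (a * c + ((N : ℝ) - 1) * (b * d))
          (a * d + b * c + ((N : ℝ) - 2) * (b * d)) := by
  have split : ∀ (x y : ℝ) (i j : Fin N),
      (if i = j then x else y) = y + if i = j then x - y else 0 := by
    intro x y i j
    split_ifs <;> ring
  ext i j
  simp only [twoValued, Matrix.mul_apply, Matrix.of_apply]
  -- Each factor is a constant plus a multiple of a Kronecker delta, so the sum collapses.
  simp_rw [split a b, split c d, add_mul, mul_add, Finset.sum_add_distrib]
  by_cases h : i = j
  · simp [h]
    ring
  · simp [h]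
    ring

theorem twoValued_transpose (N : ℕ) (a b : ℝ) : (twoValued N a b)ᵀ = twoValued N a b := by
  ext i j
  simp [twoValued, eq_comm]

/-- The matrix Riccati ODE `-K̇ = KA + AᵀK - (N/ν)K² + (1/N)Id` for the structured gain
`K(t)` with diagonal `k_d(t)` and off-diagonal `k_o(t)` is equivalent to the scalar system
for `(k_d, k_o)`. -/
theorem riccati_ode_matrix_iff_scalar
    (N : ℕ) (hN : 2 ≤ N) (p ν : ℝ) (hν : 0 < ν)
    (kd ko : ℝ → ℝ) (hkd : Differentiable ℝ kd) (hko : Differentiable ℝ ko)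
    (A : Matrix (Fin N) (Fin N) ℝ)
    (K : ℝ → Matrix (Fin N) (Fin N) ℝ)
    (hA : A = Matrix.of fun i j => if i = j then p * (1 - (N : ℝ)) / N else p / N)
    (hK : ∀ t, K t = Matrix.of fun i j => if i = j then kd t else ko t) :
    (∀ t, ∀ i j : Fin N,
        -deriv (fun τ => K τ i j) t
          = (K t * A + Aᵀ * K t - ((N : ℝ) / ν) • (K t * K t)
              + ((1 : ℝ) / N) • (1 : Matrix (Fin N) (Fin N) ℝ)) i j) ↔
    (∀ t,
      (-deriv kd t = -(2 * p * ((N : ℝ) - 1) / N) * (kd t - ko t)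
          - ((N : ℝ) / ν) * ((kd t) ^ 2 + ((N : ℝ) - 1) * (ko t) ^ 2) + 1 / N) ∧
      (-deriv ko t = (2 * p / N) * (kd t - ko t)
          - ((N : ℝ) / ν) * (2 * kd t * ko t + ((N : ℝ) - 2) * (ko t) ^ 2))) := by
  have hN0 : (N : ℝ) ≠ 0 := by
    have : N ≠ 0 := by omega
    exact_mod_cast this
  have hA' : A = twoValued N (p * (1 - (N : ℝ)) / N) (p / N) := hA
  have hK' : ∀ t, K t = twoValued N (kd t) (ko t) := hK
  have rhs_diag : ∀ t (i : Fin N),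
      (K t * A + Aᵀ * K t - ((N : ℝ) / ν) • (K t * K t)
          + ((1 : ℝ) / N) • (1 : Matrix (Fin N) (Fin N) ℝ)) i i
        = -(2 * p * ((N : ℝ) - 1) / N) * (kd t - ko t)
          - ((N : ℝ) / ν) * ((kd t) ^ 2 + ((N : ℝ) - 1) * (ko t) ^ 2) + 1 / N := by
    intro t i
    rw [hA', hK' t, twoValued_transpose]
    simp only [twoValued_mul]
    simp [twoValued]
    field_simp
    ring
  have rhs_off : ∀ t (i j : Fin N), i ≠ j →
      (K t * A + Aᵀ * K t - ((N : ℝ) / ν) • (K t * K t)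
          + ((1 : ℝ) / N) • (1 : Matrix (Fin N) (Fin N) ℝ)) i j
        = (2 * p / N) * (kd t - ko t)
          - ((N : ℝ) / ν) * (2 * kd t * ko t + ((N : ℝ) - 2) * (ko t) ^ 2) := by
    intro t i j hij
    rw [hA', hK' t, twoValued_transpose]
    simp only [twoValued_mul]
    simp [twoValued, hij]
    field_simp
    ring
  have fun_diag : ∀ i : Fin N, (fun τ => K τ i i) = kd := by
    intro i
    funext τ
    simp [hK]
  have fun_off : ∀ i j : Fin N, i ≠ j → (fun τ => K τ i j) = ko := by
    intro i j hij
    funext τ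
    simp [hK, hij]
  constructor
  · intro h t
    let i : Fin N := ⟨0, by omega⟩
    let j : Fin N := ⟨1, by omega⟩
    have hij : i ≠ j := by simp [i, j]
    have hd := h t i i
    have ho := h t i j
    rw [rhs_diag, fun_diag] at hd
    rw [rhs_off t i j hij, fun_off i j hij] at ho
    exact ⟨hd, ho⟩
  · intro h t i j
    by_cases hij : i = j
    · subst hij
      rw [rhs_diag, fun_diag]
      exact (h t).1
    · rw [rhs_off t i j hij, fun_off i j hij]
      exact (h t).2
end
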